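/- Let f(z_1,z_2,z_3) = z_1^3 + z_2^3 + z_3^2 + z_1z_2. Then f is an isolated singularity nondegenerate in the Kouchnirenko sense, every 2-dimensional compact face of its Newton boundary is exceptional, the segment [(1,1,0),(0,0,2)] is a compact edge of Γ(f), and the Łojasiewicz exponent satisfies £_0(f) = 1, which is strictly less than max_{S ∈ E_f} m(S) − 1 = 2. -/

import Mathlib

/-!
Write `A = (3,0,0)`, `B = (0,3,0)`, `C = (0,0,2)`, `D = (1,1,0)` for the exponents of `f`.

Newton boundary. For a positive weight `u`, the face `Δ(u, Γ₊(f))` is the convex hull of the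
exponents minimising `⟨u, ·⟩` (`faceOf_hull`, `face_eq`). The points `A` and `B` are never both
minimisers, since `3u₁ = 3u₂` forces `u₁ + u₂ < 3u₁`. Hence the only plane faces are the triangles
`ACD` and `BCD` (`gammaTwo_cases`). Each is exceptional: `D` is at distance `1` from the axes `OX₁`
and `OX₂`, and `AC`, `BC` are edges in coordinate planes. The equations `3u₁ = 2u₃ = u₁ + u₂` of
the triangle `ACD` determine `u` up to scaling and give the intercepts `3`, `3/2`, `2`, so
`m(ACD) = 3`, and `m(BCD) = 3` in the same way.

Nondegeneracy. A face polynomial keeps some of the four monomials, at least one and never both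
`z₁³` and `z₂³`; one of its partial derivatives is then a single monomial, which does not vanish on
the torus (`nondeg_quad`).

Łojasiewicz exponent. The gradient is `(3z₁² + z₂, 3z₂² + z₁, 2z₃)`, so `‖∇f(z)‖ ≥ ‖z‖ / 2` near
`0` (`norm_le_grad`). This gives both the isolated singularity and the bound `≤ 1`, while on the
`z₃`-axis `‖∇f‖ = 2‖z‖` rules out every exponent below `1` (`loj_quad`).
-/

open Finset Filter Topology

/-- The `i`-th partial derivative of `f`. -/
noncomputable def pder {n : ℕ} (i : Fin n) (f : (Fin n → ℂ) → ℂ) : (Fin n → ℂ) → ℂ :=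
  fun z => fderiv ℂ f z (Pi.single i 1)

/-- The iterated partial derivative `∂^ν f` for a multi-index `ν`. -/
noncomputable def mder {n : ℕ} (ν : Fin n → ℕ) (f : (Fin n → ℂ) → ℂ) : (Fin n → ℂ) → ℂ :=
  ((List.finRange n).map fun i => (pder i)^[ν i]).foldr (fun g acc => g acc) f

/-- The support of the Taylor expansion of `f` at `0`. -/
def NSupp {n : ℕ} (f : (Fin n → ℂ) → ℂ) : Set (Fin n → ℕ) :=
  {ν | mder ν f 0 ≠ 0}

/-- The Taylor coefficient `a_ν` of `f` at `0`. -/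
noncomputable def coeffOf {n : ℕ} (f : (Fin n → ℂ) → ℂ) (ν : Fin n → ℕ) : ℂ :=
  mder ν f 0 / ((∏ i, (ν i).factorial : ℕ) : ℂ)

/-- The Newton diagram `Γ₊(f)`: the convex hull of `⋃_{ν ∈ supp f} (ν + ℝ₊ⁿ)`. -/
def NDiag {n : ℕ} (f : (Fin n → ℂ) → ℂ) : Set (Fin n → ℝ) :=
  convexHull ℝ {x | ∃ ν ∈ NSupp f, ∀ i, (ν i : ℝ) ≤ x i}

/-- `l(u, A) = inf {⟨u, v⟩ : v ∈ A}`. -/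
noncomputable def ell {n : ℕ} (u : Fin n → ℝ) (A : Set (Fin n → ℝ)) : ℝ :=
  sInf ((fun v => ∑ i, u i * v i) '' A)

/-- The face `Δ(u, A) = {v ∈ A : ⟨u, v⟩ = l(u, A)}`. -/
def faceOf {n : ℕ} (u : Fin n → ℝ) (A : Set (Fin n → ℝ)) : Set (Fin n → ℝ) :=
  {v | v ∈ A ∧ ∑ i, u i * v i = ell u A}

/-- `S` is a compact face of the Newton diagram of `f` (member of the Newton boundary). -/
def IsCompactFace {n : ℕ} (f : (Fin n → ℂ) → ℂ) (S : Set (Fin n → ℝ)) : Prop :=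
  ∃ u : Fin n → ℝ, (∀ i, 0 < u i) ∧ S = faceOf u (NDiag f)

/-- The dimension of a face, as the rank of the direction of its affine span. -/
noncomputable def faceDim {n : ℕ} (S : Set (Fin n → ℝ)) : ℕ :=
  Module.finrank ℝ (affineSpan ℝ S).direction

/-- `Γ^k(f)`: the `k`-dimensional compact faces of the Newton boundary of `f`. -/
def GammaK {n : ℕ} (f : (Fin n → ℂ) → ℂ) (k : ℕ) : Set (Set (Fin n → ℝ)) :=
  {S | IsCompactFace f S ∧ faceDim S = k}

/-- The quasihomogeneous polynomial `f_S = Σ_{ν ∈ S} a_ν z^ν`. -/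
noncomputable def facePoly {n : ℕ} (f : (Fin n → ℂ) → ℂ) (S : Set (Fin n → ℝ)) :
    (Fin n → ℂ) → ℂ :=
  fun z => ∑' ν : {ν : Fin n → ℕ // (fun i => (ν i : ℝ)) ∈ S}, coeffOf f ν.1 * ∏ i, z i ^ ν.1 i

/-- `f` is nondegenerate in the Kouchnirenko sense. -/
def Nondeg {n : ℕ} (f : (Fin n → ℂ) → ℂ) : Prop :=
  ∀ S, IsCompactFace f S →
    ¬∃ z : Fin n → ℂ, (∀ i, z i ≠ 0) ∧ ∀ i, pder i (facePoly f S) z = 0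

/-- `f` is a singularity: a nonzero holomorphic germ with `f 0 = 0`, `∇f 0 = 0`. -/
def IsSing {n : ℕ} (f : (Fin n → ℂ) → ℂ) : Prop :=
  AnalyticAt ℂ f 0 ∧ (¬∀ᶠ z in 𝓝 0, f z = 0) ∧ f 0 = 0 ∧ ∀ i, pder i f 0 = 0

/-- `f` is an isolated singularity: `∇f` has an isolated zero at `0`. -/
def IsIsolSing {n : ℕ} (f : (Fin n → ℂ) → ℂ) : Prop :=
  IsSing f ∧ ∃ r > (0 : ℝ), ∀ z : Fin n → ℂ, ‖z‖ < r → z ≠ 0 → ∃ i, pder i f z ≠ 0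

/-- Euclidean distance of a point of `ℝ³` to the `i`-th coordinate axis. -/
noncomputable def distAxis (i : Fin 3) (W : Fin 3 → ℝ) : ℝ :=
  Real.sqrt (∑ j ∈ Finset.univ.erase i, (W j) ^ 2)

/-- The vertices (0-dimensional compact faces of the Newton boundary of `f`) lying in `S`. -/
def vtxOf (f : (Fin 3 → ℂ) → ℂ) (S : Set (Fin 3 → ℝ)) : Set (Fin 3 → ℝ) :=
  {A | IsCompactFace f {A} ∧ A ∈ S}

/-- `S` is an exceptional face with respect to the axis `OX_i`: one of its vertices `W` is
at distance `1` from `OX_i` and the remaining vertices constitute a `1`-dimensional face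
lying in a coordinate plane containing `OX_i`. -/
def ExcWrt (f : (Fin 3 → ℂ) → ℂ) (i : Fin 3) (S : Set (Fin 3 → ℝ)) : Prop :=
  ∃ W ∈ vtxOf f S, distAxis i W = 1 ∧
    ∃ T ∈ GammaK f 1, (∃ j, j ≠ i ∧ T ⊆ {x : Fin 3 → ℝ | x j = 0}) ∧
      vtxOf f T = vtxOf f S \ {W}

/-- The set `E_f` of exceptional 2-dimensional faces of `f`. -/
def Ef (f : (Fin 3 → ℂ) → ℂ) : Set (Set (Fin 3 → ℝ)) :=
  {S | S ∈ GammaK f 2 ∧ ∃ i, ExcWrt f i S}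

/-- `I` is the segment `I_j^m` of the family `𝒥` for the given `m`. -/
def segJ (m : ℕ) (I : Set (Fin 3 → ℝ)) : Prop :=
  I = segment ℝ ![0, 1, 1] ![(m : ℝ), 0, 0] ∨
  I = segment ℝ ![1, 0, 1] ![0, (m : ℝ), 0] ∨
  I = segment ℝ ![1, 1, 0] ![0, 0, (m : ℝ)]

/-- `I` belongs to the family `𝒥 = {I_j^k : j = 1,2,3, k ≥ 2}`. -/
def InJ (I : Set (Fin 3 → ℝ)) : Prop := ∃ m : ℕ, 2 ≤ m ∧ segJ m I

/-- The Łojasiewicz exponent `£₀(f) = l₀(∇f)`: the infimum of exponents `α` with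
`‖∇f(z)‖ ≥ C‖z‖^α` near `0`. -/
noncomputable def loj {n : ℕ} (f : (Fin n → ℂ) → ℂ) : ℝ :=
  sInf {α : ℝ | 0 ≤ α ∧ ∃ C > (0 : ℝ), ∃ r > (0 : ℝ), ∀ z : Fin n → ℂ,
    ‖z‖ < r → C * ‖z‖ ^ α ≤ ‖(fun i => pder i f z : Fin n → ℂ)‖}

/-- `m(S)`: the maximal axis intercept of the supporting hyperplane of the face `S`. -/
noncomputable def mFace {n : ℕ} (f : (Fin n → ℂ) → ℂ) (S : Set (Fin n → ℝ)) : ℝ :=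
  sSup {m | ∃ u : Fin n → ℝ, (∀ i, 0 < u i) ∧ S = faceOf u (NDiag f) ∧
    m = ⨆ i, ell u (NDiag f) / u i}

/-! ### Derivatives of polynomials -/

open MvPolynomial in
lemma pder_eval {n : ℕ} (i : Fin n) (p : MvPolynomial (Fin n) ℂ) :
    pder i (fun z => eval z p) = fun z => eval z (pderiv i p) := by
  have hd : ∀ (q : MvPolynomial (Fin n) ℂ) (z : Fin n → ℂ),
      DifferentiableAt ℂ (fun z => eval z q) z := fun q z =>
    ((AnalyticOnNhd.eval_mvPolynomial q) z trivial).differentiableAt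
  funext z
  unfold pder
  induction p using MvPolynomial.induction_on with
  | C a => simp
  | add p q hp hq =>
    simp only [map_add]
    rw [fderiv_fun_add (hd p z) (hd q z), add_apply, hp, hq]
  | mul_X p j hp =>
    simp only [map_mul, eval_X]
    have hX : HasFDerivAt (fun z : Fin n → ℂ => z j) (ContinuousLinearMap.proj j) z :=
      (ContinuousLinearMap.proj (R := ℂ) (φ := fun _ : Fin n => ℂ) j).hasFDerivAt
    rw [fderiv_fun_mul (hd p z) hX.differentiableAt, hX.fderiv]
    simp [hp, pderiv_X, Pi.single_apply, Derivation.leibniz, eq_comm]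
    split_ifs <;> simp

open MvPolynomial in
lemma pder_iterate_eval {n : ℕ} (i : Fin n) (k : ℕ) (p : MvPolynomial (Fin n) ℂ) :
    (pder i)^[k] (fun z => eval z p) = fun z => eval z ((pderiv i)^[k] p) := by
  induction k generalizing p with
  | zero => rfl
  | succ k ih => rw [Function.iterate_succ_apply, Function.iterate_succ_apply, pder_eval, ih]

open MvPolynomial in
/-- The hypothesis `m i = 0` makes the falling factorial produced by `∂ᵢᵏ` equal to `k!`. -/
lemma coeff_pderiv_iterate {n : ℕ} (i : Fin n) (k : ℕ) (p : MvPolynomial (Fin n) ℂ)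
    (m : Fin n →₀ ℕ) (hm : m i = 0) :
    coeff m ((pderiv i)^[k] p) = coeff (m + Finsupp.single i k) p * (k.factorial : ℂ) := by
  induction k generalizing p with
  | zero => simp
  | succ k ih =>
    rw [Function.iterate_succ_apply, ih, coeff_pderiv, add_assoc, ← Finsupp.single_add]
    simp [hm, Nat.factorial_succ]
    ring

open MvPolynomial in
/-- Taylor's formula at the origin for a polynomial in three variables. -/
lemma mder_eval (p : MvPolynomial (Fin 3) ℂ) (ν : Fin 3 → ℕ) :
    mder ν (fun z => eval z p) 0 =
      coeff (Finsupp.equivFunOnFinite.symm ν) p * ((∏ i, (ν i).factorial : ℕ) : ℂ) := by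
  have h : mder ν (fun z => eval z p) =
      (pder 0)^[ν 0] ((pder 1)^[ν 1] ((pder 2)^[ν 2] (fun z => eval z p))) := by
    simp [mder, List.finRange_succ]
  have hν : (Finsupp.equivFunOnFinite.symm ν : Fin 3 →₀ ℕ) =
      0 + Finsupp.single 0 (ν 0) + Finsupp.single 1 (ν 1) + Finsupp.single 2 (ν 2) := by
    ext i
    fin_cases i <;> simp
  rw [h, pder_iterate_eval, pder_iterate_eval, pder_iterate_eval]
  change eval (0 : Fin 3 → ℂ) _ = _
  have h0 (q : MvPolynomial (Fin 3) ℂ) : eval (0 : Fin 3 → ℂ) q = coeff 0 q :=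
    eval₂Hom_zero_apply (RingHom.id ℂ) q
  rw [h0, coeff_pderiv_iterate _ _ _ _ (by simp),
    coeff_pderiv_iterate _ _ _ _ (by simp), coeff_pderiv_iterate _ _ _ _ (by simp), hν,
    Fin.prod_univ_three]
  push_cast
  ring

/-! ### Faces of a Newton polyhedron -/

/-- If `m` is the minimum of `⟨u, ·⟩` over `P`, with `u` positive, the face selected by `u` in the
convex hull of `P + ℝ₊ⁿ` is the convex hull of the minimisers in `P`. The reason is that the points
`v` with `⟨u, v⟩ ≥ m` that lie in that hull in case of equality form a convex set containing
`P + ℝ₊ⁿ`. -/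
lemma faceOf_hull {n : ℕ} (P : Set (Fin n → ℝ)) (u : Fin n → ℝ) (hu : ∀ i, 0 < u i) (m : ℝ)
    (hm : ∀ ν ∈ P, m ≤ ∑ i, u i * ν i) (hP : ∃ ν ∈ P, ∑ i, u i * ν i = m) :
    ell u (convexHull ℝ {x : Fin n → ℝ | ∃ ν ∈ P, ∀ i, ν i ≤ x i}) = m ∧
    faceOf u (convexHull ℝ {x : Fin n → ℝ | ∃ ν ∈ P, ∀ i, ν i ≤ x i}) =
      convexHull ℝ {ν | ν ∈ P ∧ ∑ i, u i * ν i = m} := by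
  set N := convexHull ℝ {x : Fin n → ℝ | ∃ ν ∈ P, ∀ i, ν i ≤ x i} with hN
  set F := convexHull ℝ {ν | ν ∈ P ∧ ∑ i, u i * ν i = m} with hF
  have lin : ∀ (a b : ℝ) (v w : Fin n → ℝ), ∑ i, u i * (a • v + b • w) i =
      a * ∑ i, u i * v i + b * ∑ i, u i * w i := by
    intro a b v w
    simp only [Finset.mul_sum, ← Finset.sum_add_distrib, Pi.add_apply, Pi.smul_apply, smul_eq_mul]
    exact Finset.sum_congr rfl fun i _ => by ring
  have hFsub : F ⊆ {v | v ∈ N ∧ ∑ i, u i * v i = m} := by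
    refine convexHull_min ?_ ?_
    · rintro ν ⟨h1, h2⟩
      exact ⟨subset_convexHull ℝ _ ⟨ν, h1, fun i => le_rfl⟩, h2⟩
    · rintro v ⟨hv, hv'⟩ w ⟨hw, hw'⟩ a b ha hb hab
      refine ⟨convex_convexHull ℝ _ hv hw ha hb hab, ?_⟩
      rw [lin, hv', hw', ← add_mul, hab, one_mul]
  have hNsub : N ⊆ {v | m ≤ ∑ i, u i * v i ∧ (∑ i, u i * v i = m → v ∈ F)} := by
    refine convexHull_min ?_ ?_
    · rintro x ⟨ν, hν, hx⟩
      have hle : ∑ i, u i * ν i ≤ ∑ i, u i * x i :=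
        Finset.sum_le_sum fun i _ => mul_le_mul_of_nonneg_left (hx i) (hu i).le
      refine ⟨(hm ν hν).trans hle, fun h => ?_⟩
      have heq : ∑ i, u i * ν i = ∑ i, u i * x i := le_antisymm hle (h ▸ hm ν hν)
      have := (Finset.sum_eq_sum_iff_of_le
        fun i _ => mul_le_mul_of_nonneg_left (hx i) (hu i).le).1 heq
      have hxν : ν = x := funext fun i => mul_left_cancel₀ (hu i).ne' (this i (Finset.mem_univ i))
      exact subset_convexHull ℝ _ ⟨hxν ▸ hν, h⟩
    · rintro v ⟨hv, hv'⟩ w ⟨hw, hw'⟩ a b ha hb hab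
      refine ⟨?_, fun h => ?_⟩
      · rw [lin]
        calc m = a * m + b * m := by rw [← add_mul, hab, one_mul]
          _ ≤ _ := add_le_add (mul_le_mul_of_nonneg_left hv ha) (mul_le_mul_of_nonneg_left hw hb)
      · rw [lin] at h
        have hm1 : a * m + b * m = m := by rw [← add_mul, hab, one_mul]
        have h1 := mul_le_mul_of_nonneg_left hv ha
        have h2 := mul_le_mul_of_nonneg_left hw hb
        rcases ha.eq_or_lt with rfl | ha
        · obtain rfl : b = 1 := by linarith
          simpa using hw' (by linarith)
        rcases hb.eq_or_lt with rfl | hb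
        · obtain rfl : a = 1 := by linarith
          simpa using hv' (by linarith)
        refine convex_convexHull ℝ _ (hv' ?_) (hw' ?_) ha.le hb.le hab
        · exact (mul_left_cancel₀ ha.ne' (by linarith))
        · exact (mul_left_cancel₀ hb.ne' (by linarith))
  have hell : ell u N = m := by
    obtain ⟨ν, hν, hνm⟩ := hP
    refine IsLeast.csInf_eq ⟨⟨ν, subset_convexHull ℝ _ ⟨ν, hν, fun i => le_rfl⟩, hνm⟩, ?_⟩
    rintro _ ⟨v, hv, rfl⟩
    exact (hNsub hv).1
  refine ⟨hell, Set.Subset.antisymm ?_ ?_⟩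
  · rintro v ⟨hv, hv'⟩
    exact (hNsub hv).2 (hv'.trans hell)
  · intro v hv
    exact ⟨(hFsub hv).1, (hFsub hv).2.trans hell.symm⟩

/-! ### The function, its Taylor support and its face polynomials -/

/-- The four exponents of the monomials of `f`. -/
def fExp : Finset (Fin 3 → ℕ) := {![3, 0, 0], ![0, 3, 0], ![0, 0, 2], ![1, 1, 0]}

/-- The polynomial `a z₁³ + b z₂³ + c z₃² + d z₁z₂`; `f` and all its face polynomials are of
this shape. -/
def quad (a b c d : ℂ) : (Fin 3 → ℂ) → ℂ :=
  fun z => a * z 0 ^ 3 + b * z 1 ^ 3 + c * z 2 ^ 2 + d * (z 0 * z 1)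

open MvPolynomial in
lemma pder_quad (a b c d : ℂ) (z : Fin 3 → ℂ) :
    pder 0 (quad a b c d) z = 3 * a * z 0 ^ 2 + d * z 1 ∧
    pder 1 (quad a b c d) z = 3 * b * z 1 ^ 2 + d * z 0 ∧
    pder 2 (quad a b c d) z = 2 * c * z 2 := by
  have h : quad a b c d = fun z => eval z
      (C a * X 0 ^ 3 + C b * X 1 ^ 3 + C c * X 2 ^ 2 + C d * (X 0 * X 1) :
        MvPolynomial (Fin 3) ℂ) := by
    funext z
    simp [quad]
  rw [h, pder_eval, pder_eval, pder_eval]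
  refine ⟨?_, ?_, ?_⟩ <;> simp [pderiv_X, Derivation.leibniz, Derivation.leibniz_pow] <;> ring

open MvPolynomial in
lemma mder_quad (ν : Fin 3 → ℕ) :
    mder ν (quad 1 1 1 1) 0 =
      (if ν ∈ fExp then 1 else 0) * ((∏ i, (ν i).factorial : ℕ) : ℂ) := by
  have h : quad 1 1 1 1 = fun z => eval z
      (∑ μ ∈ fExp, monomial (Finsupp.equivFunOnFinite.symm μ) 1 : MvPolynomial (Fin 3) ℂ) := by
    funext z
    simp [quad, fExp, eval_monomial, Finsupp.prod_fintype, Fin.prod_univ_three]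
    ring
  rw [h, mder_eval]
  simp [coeff_sum, coeff_monomial]

lemma coeffOf_quad (ν : Fin 3 → ℕ) : coeffOf (quad 1 1 1 1) ν = if ν ∈ fExp then 1 else 0 := by
  rw [coeffOf, mder_quad, mul_div_cancel_right₀]
  exact_mod_cast Finset.prod_ne_zero_iff.2 fun i _ => (ν i).factorial_ne_zero

lemma NSupp_quad : NSupp (quad 1 1 1 1) = fExp := by
  ext ν
  have : ((∏ i, (ν i).factorial : ℕ) : ℂ) ≠ 0 := by
    exact_mod_cast Finset.prod_ne_zero_iff.2 fun i _ => (ν i).factorial_ne_zero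
  simp only [NSupp, Set.mem_ofPred_eq, mder_quad, Finset.mem_coe]
  split_ifs with h
  · simpa only [h, one_mul, iff_true] using this
  · simp [h]

open Classical in
/-- The series defining `f_S` reduces to the monomials of `f` whose exponent lies in `S`. -/
lemma facePoly_quad (S : Set (Fin 3 → ℝ)) :
    facePoly (quad 1 1 1 1) S = quad (if ![3, 0, 0] ∈ S then 1 else 0)
      (if ![0, 3, 0] ∈ S then 1 else 0) (if ![0, 0, 2] ∈ S then 1 else 0)
      (if ![1, 1, 0] ∈ S then 1 else 0) := by
  funext z
  have e1 : (fun i => ((![3, 0, 0] : Fin 3 → ℕ) i : ℝ)) = ![3, 0, 0] := by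
    ext i; fin_cases i <;> simp
  have e2 : (fun i => ((![0, 3, 0] : Fin 3 → ℕ) i : ℝ)) = ![0, 3, 0] := by
    ext i; fin_cases i <;> simp
  have e3 : (fun i => ((![0, 0, 2] : Fin 3 → ℕ) i : ℝ)) = ![0, 0, 2] := by
    ext i; fin_cases i <;> simp
  have e4 : (fun i => ((![1, 1, 0] : Fin 3 → ℕ) i : ℝ)) = ![1, 1, 0] := by
    ext i; fin_cases i <;> simp
  unfold facePoly
  have := tsum_subtype {ν : Fin 3 → ℕ | (fun i => (ν i : ℝ)) ∈ S}
    fun ν => coeffOf (quad 1 1 1 1) ν * ∏ i, z i ^ ν i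
  refine this.trans ?_
  rw [tsum_eq_sum (s := fExp)]
  · have hc : ∀ ν ∈ fExp, Set.indicator {ν : Fin 3 → ℕ | (fun i => (ν i : ℝ)) ∈ S}
        (fun ν => coeffOf (quad 1 1 1 1) ν * ∏ i, z i ^ ν i) ν =
        (if (fun i => (ν i : ℝ)) ∈ S then 1 else 0) * ∏ i, z i ^ ν i := by
      intro ν hν
      simp [Set.indicator_apply, coeffOf_quad, hν]
    rw [Finset.sum_congr rfl hc, fExp, Finset.sum_insert (by decide),
      Finset.sum_insert (by decide), Finset.sum_insert (by decide), Finset.sum_singleton,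
      e1, e2, e3, e4]
    simp [quad, Fin.prod_univ_three]
    ring
  · intro ν hν
    simp [Set.indicator_apply, coeffOf_quad, hν]

/-! ### Faces of the Newton diagram and nondegeneracy -/

/-- The exponents of `f` as points of `ℝ³`. -/
def V : Set (Fin 3 → ℝ) := {![3, 0, 0], ![0, 3, 0], ![0, 0, 2], ![1, 1, 0]}

lemma NDiag_quad : NDiag (quad 1 1 1 1) =
    convexHull ℝ {x : Fin 3 → ℝ | ∃ ν ∈ V, ∀ i, ν i ≤ x i} := by
  unfold NDiag
  rw [NSupp_quad]
  congr 1
  ext x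
  simp [fExp, V, Fin.forall_fin_succ]

/-- `m` is the minimum of `⟨u, ·⟩` over the exponents of `f`. -/
def IsMinVal (u : Fin 3 → ℝ) (m : ℝ) : Prop :=
  (m ≤ u 0 * 3 ∧ m ≤ u 1 * 3 ∧ m ≤ u 2 * 2 ∧ m ≤ u 0 + u 1) ∧
    (m = u 0 * 3 ∨ m = u 1 * 3 ∨ m = u 2 * 2 ∨ m = u 0 + u 1)

lemma exists_isMinVal (u : Fin 3 → ℝ) : ∃ m, IsMinVal u m := by
  refine ⟨min (min (u 0 * 3) (u 1 * 3)) (min (u 2 * 2) (u 0 + u 1)), by simp, ?_⟩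
  rcases min_choice (min (u 0 * 3) (u 1 * 3)) (min (u 2 * 2) (u 0 + u 1)) with h | h <;> rw [h]
  · rcases min_choice (u 0 * 3) (u 1 * 3) with h | h <;> simp [h]
  · rcases min_choice (u 2 * 2) (u 0 + u 1) with h | h <;> simp [h]

/-- Only the exponents of `f` minimising `⟨u, ·⟩` span the face of the Newton diagram selected
by `u`. -/
lemma face_eq {u : Fin 3 → ℝ} (hu : ∀ i, 0 < u i) {m : ℝ} (hm : IsMinVal u m) :
    ell u (NDiag (quad 1 1 1 1)) = m ∧ faceOf u (NDiag (quad 1 1 1 1)) =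
      convexHull ℝ {ν | ν ∈ V ∧ ∑ i, u i * ν i = m} := by
  rw [NDiag_quad]
  obtain ⟨⟨h1, h2, h3, h4⟩, h⟩ := hm
  refine faceOf_hull V u hu m ?_ ?_
  · rintro ν (rfl | rfl | rfl | rfl) <;> simpa [Fin.sum_univ_three]
  · simp only [V, Set.mem_insert_iff, Set.mem_singleton_iff, exists_eq_or_imp, exists_eq_left]
    simpa [Fin.sum_univ_three, eq_comm] using h

lemma mem_face {u : Fin 3 → ℝ} (hu : ∀ i, 0 < u i) {m : ℝ} (hm : IsMinVal u m) {P : Fin 3 → ℝ}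
    (hP : P ∈ V) : P ∈ faceOf u (NDiag (quad 1 1 1 1)) ↔ ∑ i, u i * P i = m := by
  rw [faceOf, Set.mem_ofPred_eq, (face_eq hu hm).1, NDiag_quad]
  exact and_iff_right (subset_convexHull ℝ _ ⟨P, hP, fun i => le_rfl⟩)

lemma nondeg_quad : Nondeg (quad 1 1 1 1) := by
  rintro S ⟨u, hu, rfl⟩ ⟨z, hz, hd⟩
  obtain ⟨m, hm⟩ := exists_isMinVal u
  rw [facePoly_quad] at hd
  have h0 := hz 0
  have h1 := hz 1
  have h2 := hz 2
  have d0 := hd 0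
  have d1 := hd 1
  have d2 := hd 2
  simp only [pder_quad] at d0 d1 d2
  simp only [mem_face hu hm (show ![3, 0, 0] ∈ V by simp [V]),
    mem_face hu hm (show ![0, 3, 0] ∈ V by simp [V]),
    mem_face hu hm (show ![0, 0, 2] ∈ V by simp [V]),
    mem_face hu hm (show ![1, 1, 0] ∈ V by simp [V])] at d0 d1 d2
  have u0 := hu 0
  have u1 := hu 1
  obtain ⟨⟨l1, l2, l3, l4⟩, hm⟩ := hm
  have nA : u 0 * 3 = m → u 1 * 3 = m → False := fun _ _ => by linarith
  simp only [Fin.sum_univ_three, Matrix.cons_val_zero, Matrix.cons_val_one, Matrix.cons_val,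
    mul_zero, add_zero, zero_add, mul_one] at d0 d1 d2
  by_cases cC : u 2 * 2 = m
  · simp [cC, h2] at d2
  by_cases cD : u 0 + u 1 = m
  · by_cases cA : u 0 * 3 = m
    · have cB : ¬u 1 * 3 = m := nA cA
      simp [cD, cB, h0] at d1
    · simp [cA, cD, h1] at d0
  · simp only [cD, if_false, zero_mul, add_zero] at d0 d1
    by_cases cA : u 0 * 3 = m
    · simp [cA, h0] at d0
    by_cases cB : u 1 * 3 = m
    · simp [cB, h1] at d1
    rcases hm with h | h | h | h
    · exact cA h.symm
    · exact cB h.symm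
    · exact cC h.symm
    · exact cD h.symm

/-! ### The gradient inequality, the isolated singularity and the Łojasiewicz exponent -/

/-- In `|z₂| ≤ |∂₁f| + 3|z₁|²` and `|z₁| ≤ |∂₂f| + 3|z₂|²`, the radius `1/6` turns the quadratic
terms into `|z₁|/2` and `|z₂|/2`, which are absorbed on the left. -/
lemma norm_le_grad (z : Fin 3 → ℂ) (hz : ‖z‖ < 1 / 6) :
    1 / 2 * ‖z‖ ≤ ‖(fun i => pder i (quad 1 1 1 1) z : Fin 3 → ℂ)‖ := by
  set N := ‖(fun i => pder i (quad 1 1 1 1) z : Fin 3 → ℂ)‖ with hN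
  have g (i : Fin 3) : ‖pder i (quad 1 1 1 1) z‖ ≤ N :=
    norm_le_pi_norm (fun i => pder i (quad 1 1 1 1) z : Fin 3 → ℂ) i
  have g0 := g 0
  have g1 := g 1
  have g2 := g 2
  simp only [pder_quad, mul_one, one_mul] at g0 g1 g2
  have hz0 := norm_le_pi_norm z 0
  have hz1 := norm_le_pi_norm z 1
  have a1 : ‖z 1‖ ≤ N + 3 * ‖z 0‖ ^ 2 := by
    calc ‖z 1‖ = ‖(3 * z 0 ^ 2 + z 1) - 3 * z 0 ^ 2‖ := by ring_nf
      _ ≤ ‖3 * z 0 ^ 2 + z 1‖ + ‖3 * z 0 ^ 2‖ := norm_sub_le _ _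
      _ ≤ _ := by simpa using g0
  have a0 : ‖z 0‖ ≤ N + 3 * ‖z 1‖ ^ 2 := by
    calc ‖z 0‖ = ‖(3 * z 1 ^ 2 + z 0) - 3 * z 1 ^ 2‖ := by ring_nf
      _ ≤ ‖3 * z 1 ^ 2 + z 0‖ + ‖3 * z 1 ^ 2‖ := norm_sub_le _ _
      _ ≤ _ := by simpa using g1
  have a2 : 2 * ‖z 2‖ ≤ N := by simpa using g2
  have n0 := norm_nonneg (z 0)
  have n1 := norm_nonneg (z 1)
  have n2 := norm_nonneg (z 2)
  have b1 : ‖z 1‖ ≤ N + ‖z 0‖ / 2 := by nlinarith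
  have b0 : ‖z 0‖ ≤ N + ‖z 1‖ / 2 := by nlinarith
  suffices ‖z‖ ≤ 2 * N by linarith
  rw [pi_norm_le_iff_of_nonneg (by linarith)]
  intro i
  fin_cases i <;> simp <;> linarith

lemma isolSing_quad : IsIsolSing (quad 1 1 1 1) := by
  refine ⟨⟨?_, ?_, by simp [quad], ?_⟩, 1 / 6, by norm_num, ?_⟩
  · have hp (i : Fin 3) : AnalyticAt ℂ (fun z : Fin 3 → ℂ => z i) 0 :=
      (ContinuousLinearMap.proj (R := ℂ) (φ := fun _ : Fin 3 => ℂ) i).analyticAt 0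
    exact (((analyticAt_const.mul ((hp 0).pow 3)).add (analyticAt_const.mul ((hp 1).pow 3))).add
      (analyticAt_const.mul ((hp 2).pow 2))).add (analyticAt_const.mul ((hp 0).mul (hp 1)))
  · intro h
    have hc : Tendsto (fun t : ℂ => (![0, 0, t] : Fin 3 → ℂ)) (𝓝[≠] 0) (𝓝 0) := by
      have : Continuous fun t : ℂ => (![0, 0, t] : Fin 3 → ℂ) := by fun_prop
      have h0 : (![0, 0, 0] : Fin 3 → ℂ) = 0 := by simp
      exact h0 ▸ (this.tendsto 0).mono_left nhdsWithin_le_nhds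
    obtain ⟨t, ht, ht0⟩ := ((hc.eventually h).and self_mem_nhdsWithin).exists
    simp [quad] at ht
    exact ht0 ht
  · intro i
    fin_cases i <;> simp [pder_quad]
  · intro z hz hz0
    by_contra! h
    have := norm_le_grad z hz
    simp only [h] at this
    have h0 : ‖(fun _ => 0 : Fin 3 → ℂ)‖ = 0 := norm_zero
    have := norm_pos_iff.2 hz0
    linarith

lemma loj_quad : loj (quad 1 1 1 1) = 1 := by
  refine IsLeast.csInf_eq ⟨⟨zero_le_one, 1 / 2, by norm_num, 1 / 6, by norm_num, fun z hz => ?_⟩, ?_⟩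
  · rw [Real.rpow_one]
    exact norm_le_grad z hz
  · rintro α ⟨-, C, hC, r, hr, h⟩
    by_contra! hα
    -- the inequality at `(0, 0, t)`, where `‖∇f‖ = 2t`, divided by `t ^ α`
    have key : ∀ᶠ t : ℝ in 𝓝[>] 0, C ≤ 2 * t ^ (1 - α) := by
      filter_upwards [self_mem_nhdsWithin, nhdsWithin_le_nhds (Iio_mem_nhds hr)] with t ht htr
      have ht : 0 < t := ht
      have htr : t < r := htr
      have hn : ‖(![0, 0, (t : ℂ)] : Fin 3 → ℂ)‖ = t := by
        refine le_antisymm ((pi_norm_le_iff_of_nonneg ht.le).2 fun i => ?_) ?_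
        · fin_cases i <;> simp [ht.le, abs_of_pos ht]
        · simpa [abs_of_pos ht] using norm_le_pi_norm (![0, 0, (t : ℂ)] : Fin 3 → ℂ) 2
      have h1 := h ![0, 0, (t : ℂ)] (hn.trans_lt htr)
      have h2 : ‖(fun i => pder i (quad 1 1 1 1) ![0, 0, (t : ℂ)] : Fin 3 → ℂ)‖ ≤ 2 * t := by
        refine (pi_norm_le_iff_of_nonneg (by positivity)).2 fun i => ?_
        fin_cases i <;> simp [pder_quad, ht.le, abs_of_pos ht]
      rw [hn] at h1
      have h3 : t ^ (1 - α) * t ^ α = t := by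
        rw [← Real.rpow_add ht]
        simp
      have h4 : 0 < t ^ α := Real.rpow_pos_of_pos ht α
      nlinarith
    have lim : Tendsto (fun t : ℝ => 2 * t ^ (1 - α)) (𝓝[>] 0) (𝓝 0) := by
      have := ((Real.continuousAt_rpow_const 0 (1 - α) (Or.inr (by linarith))).tendsto.const_mul
        2).mono_left (nhdsWithin_le_nhds (s := Set.Ioi 0))
      rwa [Real.zero_rpow (by linarith), mul_zero] at this
    exact absurd (ge_of_tendsto lim key) (by linarith)

/-! ### Vertices, edges and triangles of the Newton boundary -/

lemma sum_vec (a b c x y z : ℝ) :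
    ∑ i, (![a, b, c] : Fin 3 → ℝ) i * (![x, y, z] : Fin 3 → ℝ) i = a * x + b * y + c * z := by
  simp [Fin.sum_univ_three]

lemma isMinVal_vec (a b c m : ℝ) : IsMinVal ![a, b, c] m ↔
    (m ≤ a * 3 ∧ m ≤ b * 3 ∧ m ≤ c * 2 ∧ m ≤ a + b) ∧
      (m = a * 3 ∨ m = b * 3 ∨ m = c * 2 ∨ m = a + b) := Iff.rfl

/-- All four exponents of `f` are vertices, and there are no other vertices. -/
lemma compactFace_singleton {P : Fin 3 → ℝ} : IsCompactFace (quad 1 1 1 1) {P} ↔ P ∈ V := by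
  constructor
  · rintro ⟨u, hu, hS⟩
    obtain ⟨m, hm⟩ := exists_isMinVal u
    rw [(face_eq hu hm).2] at hS
    have hne : {ν | ν ∈ V ∧ ∑ i, u i * ν i = m}.Nonempty := by
      rw [← convexHull_nonempty_iff (𝕜 := ℝ), ← hS]
      exact Set.singleton_nonempty P
    obtain ⟨Q, hQ⟩ := hne
    have : Q ∈ ({P} : Set (Fin 3 → ℝ)) := hS ▸ subset_convexHull ℝ _ hQ
    rw [← Set.mem_singleton_iff.1 this]
    exact hQ.1
  · -- it suffices to give a positive weight whose only minimiser among the exponents is `P`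
    have key : ∀ (u : Fin 3 → ℝ) (m : ℝ), (∀ i, 0 < u i) → IsMinVal u m →
        {ν | ν ∈ V ∧ ∑ i, u i * ν i = m} = {P} → IsCompactFace (quad 1 1 1 1) {P} := by
      intro u m hu hm h
      exact ⟨u, hu, by rw [(face_eq hu hm).2, h, convexHull_singleton]⟩
    rintro (rfl | rfl | rfl | rfl)
    · refine key ![1, 10, 10] 3 (by simp [Fin.forall_fin_succ])
        (by norm_num [isMinVal_vec]) (Set.ext fun ν => ⟨?_, ?_⟩)
      · rintro ⟨rfl | rfl | rfl | rfl, h⟩ <;>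
          revert h <;> norm_num [sum_vec]
      · rintro rfl
        norm_num [V, sum_vec]
    · refine key ![10, 1, 10] 3 (by simp [Fin.forall_fin_succ])
        (by norm_num [isMinVal_vec]) (Set.ext fun ν => ⟨?_, ?_⟩)
      · rintro ⟨rfl | rfl | rfl | rfl, h⟩ <;>
          revert h <;> norm_num [sum_vec]
      · rintro rfl
        norm_num [V, sum_vec]
    · refine key ![10, 10, 1] 2 (by simp [Fin.forall_fin_succ])
        (by norm_num [isMinVal_vec]) (Set.ext fun ν => ⟨?_, ?_⟩)
      · rintro ⟨rfl | rfl | rfl | rfl, h⟩ <;>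
          revert h <;> norm_num [sum_vec]
      · rintro rfl
        norm_num [V, sum_vec]
    · refine key ![1, 1, 10] 2 (by simp [Fin.forall_fin_succ])
        (by norm_num [isMinVal_vec]) (Set.ext fun ν => ⟨?_, ?_⟩)
      · rintro ⟨rfl | rfl | rfl | rfl, h⟩ <;>
          revert h <;> norm_num [sum_vec]
      · rintro rfl
        norm_num [V, sum_vec]

/-- If `M` is the set of exponents minimising a positive weight, its convex hull is a compact face
whose vertices are the elements of `M`, because every exponent of `f` is a vertex. -/
lemma face_of_weight {M : Set (Fin 3 → ℝ)} (u : Fin 3 → ℝ) (m : ℝ) (hu : ∀ i, 0 < u i)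
    (hm : IsMinVal u m) (hM : ∀ ν, ν ∈ M ↔ ν ∈ V ∧ ∑ i, u i * ν i = m) :
    IsCompactFace (quad 1 1 1 1) (convexHull ℝ M) ∧
      vtxOf (quad 1 1 1 1) (convexHull ℝ M) = M := by
  obtain rfl : M = {ν | ν ∈ V ∧ ∑ i, u i * ν i = m} := Set.ext hM
  rw [← (face_eq hu hm).2]
  refine ⟨⟨u, hu, rfl⟩, Set.ext fun ν => ?_⟩
  refine (and_congr_left' compactFace_singleton).trans (and_congr_right fun hν => ?_)
  exact mem_face hu hm hν

lemma faceDim_convexHull {n : ℕ} (M : Set (Fin n → ℝ)) :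
    faceDim (convexHull ℝ M) = Module.finrank ℝ (vectorSpan ℝ M) := by
  rw [faceDim, affineSpan_convexHull, direction_affineSpan]

lemma faceDim_pair {n : ℕ} {P Q : Fin n → ℝ} (h : P ≠ Q) :
    faceDim (convexHull ℝ {P, Q}) = 1 := by
  rw [faceDim_convexHull, vectorSpan_pair, finrank_span_singleton (by simpa [sub_eq_zero])]

lemma faceDim_triple {n : ℕ} {P Q R : Fin n → ℝ} (h : ¬Collinear ℝ ({P, Q, R} : Set (Fin n → ℝ))) :
    faceDim (convexHull ℝ {P, Q, R}) = 2 := by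
  rw [faceDim_convexHull]
  have := (affineIndependent_iff_not_collinear_set.2 h).finrank_vectorSpan (n := 2) (by simp)
  have e : Set.range ![P, Q, R] = {P, Q, R} := by
    simp_rw [Matrix.range_cons, Matrix.range_empty, Set.singleton_union, insert_empty_eq]
  rwa [e] at this

/-- The exponents of `z₁³`, `z₃²`, `z₁z₂`. -/
def triA : Set (Fin 3 → ℝ) := {![3, 0, 0], ![0, 0, 2], ![1, 1, 0]}

/-- The exponents of `z₂³`, `z₃²`, `z₁z₂`. -/
def triB : Set (Fin 3 → ℝ) := {![0, 3, 0], ![0, 0, 2], ![1, 1, 0]}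

lemma faceDim_triA : faceDim (convexHull ℝ triA) = 2 := by
  refine faceDim_triple fun h => ?_
  obtain ⟨v, hv⟩ := (collinear_iff_of_mem (p₀ := ![1, 1, 0]) (by simp)).1 h
  obtain ⟨r, hr⟩ := hv ![3, 0, 0] (by simp)
  obtain ⟨s, hs⟩ := hv ![0, 0, 2] (by simp)
  have r0 := congrFun hr 0
  have r2 := congrFun hr 2
  have s2 := congrFun hs 2
  simp at r0 r2 s2
  rcases r2 with rfl | r2
  · norm_num at r0
  · simp [r2] at s2

lemma faceDim_triB : faceDim (convexHull ℝ triB) = 2 := by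
  refine faceDim_triple fun h => ?_
  obtain ⟨v, hv⟩ := (collinear_iff_of_mem (p₀ := ![1, 1, 0]) (by simp)).1 h
  obtain ⟨r, hr⟩ := hv ![0, 3, 0] (by simp)
  obtain ⟨s, hs⟩ := hv ![0, 0, 2] (by simp)
  have r0 := congrFun hr 1
  have r2 := congrFun hr 2
  have s2 := congrFun hs 2
  simp at r0 r2 s2
  rcases r2 with rfl | r2
  · norm_num at r0
  · simp [r2] at s2

/-- The exponents of `z₁³` and `z₂³` never lie on a common compact face: if `3u₁ = 3u₂ = m` then
`(1,1,0)` would have the smaller value `2m/3`. A face is thus spanned by exponents from one of the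
two triangles, and a proper subset of a triangle is collinear, too small for dimension `2`. -/
lemma gammaTwo_cases {S : Set (Fin 3 → ℝ)} (hS : S ∈ GammaK (quad 1 1 1 1) 2) :
    S = convexHull ℝ triA ∨ S = convexHull ℝ triB := by
  obtain ⟨⟨u, hu, rfl⟩, hdim⟩ := hS
  obtain ⟨m, hm⟩ := exists_isMinVal u
  rw [(face_eq hu hm).2] at hdim ⊢
  set M := {ν | ν ∈ V ∧ ∑ i, u i * ν i = m} with hM
  have hcol : ∀ P Q : Fin 3 → ℝ, ¬M ⊆ {P, Q} := by
    intro P Q h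
    have := ((collinear_pair ℝ P Q).subset h).finrank_le_one
    rw [faceDim_convexHull] at hdim
    omega
  have hMV : ∀ ν ∈ M, ν = ![3, 0, 0] ∨ ν = ![0, 3, 0] ∨ ν = ![0, 0, 2] ∨ ν = ![1, 1, 0] :=
    fun ν hν => hν.1
  have hAB : ![3, 0, 0] ∈ M → ![0, 3, 0] ∉ M := by
    rintro ⟨-, h1⟩ ⟨-, h2⟩
    simp [Fin.sum_univ_three] at h1 h2
    have := hm.1.2.2.2
    linarith [hu 0, hu 1]
  have hC : ![0, 0, 2] ∈ M := by
    by_contra hC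
    by_cases hA : ![3, 0, 0] ∈ M
    · refine hcol ![3, 0, 0] ![1, 1, 0] fun ν hν => ?_
      rcases hMV ν hν with rfl | rfl | rfl | rfl
      exacts [by simp, absurd hν (hAB hA), absurd hν hC, by simp]
    · refine hcol ![0, 3, 0] ![1, 1, 0] fun ν hν => ?_
      rcases hMV ν hν with rfl | rfl | rfl | rfl
      exacts [absurd hν hA, by simp, absurd hν hC, by simp]
  have hD : ![1, 1, 0] ∈ M := by
    by_contra hD
    by_cases hA : ![3, 0, 0] ∈ M
    · refine hcol ![3, 0, 0] ![0, 0, 2] fun ν hν => ?_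
      rcases hMV ν hν with rfl | rfl | rfl | rfl
      exacts [by simp, absurd hν (hAB hA), by simp, absurd hν hD]
    · refine hcol ![0, 3, 0] ![0, 0, 2] fun ν hν => ?_
      rcases hMV ν hν with rfl | rfl | rfl | rfl
      exacts [absurd hν hA, by simp, by simp, absurd hν hD]
  by_cases hA : ![3, 0, 0] ∈ M
  · left
    congr 1
    refine Set.Subset.antisymm (fun ν hν => ?_) ?_
    · rcases hMV ν hν with rfl | rfl | rfl | rfl
      exacts [by simp [triA], absurd hν (hAB hA), by simp [triA], by simp [triA]]
    · rintro ν (rfl | rfl | rfl) <;> assumption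
  · have hB : ![0, 3, 0] ∈ M := by
      by_contra hB
      refine hcol ![0, 0, 2] ![1, 1, 0] fun ν hν => ?_
      rcases hMV ν hν with rfl | rfl | rfl | rfl
      exacts [absurd hν hA, absurd hν hB, by simp, by simp]
    right
    congr 1
    refine Set.Subset.antisymm (fun ν hν => ?_) ?_
    · rcases hMV ν hν with rfl | rfl | rfl | rfl
      exacts [absurd hν hA, by simp [triB], by simp [triB], by simp [triB]]
    · rintro ν (rfl | rfl | rfl) <;> assumption

lemma convex_coordPlane (j : Fin 3) : Convex ℝ {x : Fin 3 → ℝ | x j = 0} := by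
  rintro x hx y hy a b - - -
  simp_all

/-- The weight `(2, 4, 3)` selects the triangle `ACD` and `(2, 10, 3)` its edge `AC`, which lies in
the plane `x₂ = 0`; the remaining vertex is `D`. -/
lemma triA_mem_Ef : convexHull ℝ triA ∈ Ef (quad 1 1 1 1) := by
  obtain ⟨hS, hV⟩ := face_of_weight (M := triA) ![2, 4, 3] 6 (by simp [Fin.forall_fin_succ])
    (by norm_num [isMinVal_vec]) (by
      intro ν
      constructor
      · rintro (rfl | rfl | rfl) <;> norm_num [V, sum_vec]
      · rintro ⟨rfl | rfl | rfl | rfl, h⟩ <;> revert h <;> norm_num [sum_vec, triA])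
  obtain ⟨hT, hW⟩ := face_of_weight (M := {![3, 0, 0], ![0, 0, 2]}) ![2, 10, 3] 6
    (by simp [Fin.forall_fin_succ]) (by norm_num [isMinVal_vec]) (by
      intro ν
      constructor
      · rintro (rfl | rfl) <;> norm_num [V, sum_vec]
      · rintro ⟨rfl | rfl | rfl | rfl, h⟩ <;> revert h <;> norm_num [sum_vec])
  refine ⟨⟨hS, faceDim_triA⟩, 0, ![1, 1, 0], by rw [hV]; simp [triA], ?_,
    convexHull ℝ {![3, 0, 0], ![0, 0, 2]}, ⟨hT, faceDim_pair (by simp)⟩,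
    ⟨1, by simp, convexHull_min ?_ (convex_coordPlane 1)⟩, ?_⟩
  · have : (Finset.univ.erase 0 : Finset (Fin 3)) = {1, 2} := by decide
    simp [distAxis, this]
  · rintro ν (rfl | rfl) <;> simp
  · rw [hV, hW]
    ext ν
    constructor
    · rintro (rfl | rfl) <;> simp [triA]
    · rintro ⟨rfl | rfl | rfl, h⟩ <;> simp at h ⊢

/-- The mirror image of `triA_mem_Ef` under the exchange of the first two coordinates. -/
lemma triB_mem_Ef : convexHull ℝ triB ∈ Ef (quad 1 1 1 1) := by
  obtain ⟨hS, hV⟩ := face_of_weight (M := triB) ![4, 2, 3] 6 (by simp [Fin.forall_fin_succ])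
    (by norm_num [isMinVal_vec]) (by
      intro ν
      constructor
      · rintro (rfl | rfl | rfl) <;> norm_num [V, sum_vec]
      · rintro ⟨rfl | rfl | rfl | rfl, h⟩ <;> revert h <;> norm_num [sum_vec, triB])
  obtain ⟨hT, hW⟩ := face_of_weight (M := {![0, 3, 0], ![0, 0, 2]}) ![10, 2, 3] 6
    (by simp [Fin.forall_fin_succ]) (by norm_num [isMinVal_vec]) (by
      intro ν
      constructor
      · rintro (rfl | rfl) <;> norm_num [V, sum_vec]
      · rintro ⟨rfl | rfl | rfl | rfl, h⟩ <;> revert h <;> norm_num [sum_vec])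
  refine ⟨⟨hS, faceDim_triB⟩, 1, ![1, 1, 0], by rw [hV]; simp [triB], ?_,
    convexHull ℝ {![0, 3, 0], ![0, 0, 2]}, ⟨hT, faceDim_pair (by simp)⟩,
    ⟨0, by simp, convexHull_min ?_ (convex_coordPlane 0)⟩, ?_⟩
  · have : (Finset.univ.erase 1 : Finset (Fin 3)) = {0, 2} := by decide
    simp [distAxis, this]
  · rintro ν (rfl | rfl) <;> simp
  · rw [hV, hW]
    ext ν
    constructor
    · rintro (rfl | rfl) <;> simp [triB]
    · rintro ⟨rfl | rfl | rfl, h⟩ <;> simp at h ⊢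

lemma gammaTwo_eq : GammaK (quad 1 1 1 1) 2 = Ef (quad 1 1 1 1) := by
  refine Set.Subset.antisymm (fun S hS => ?_) fun S hS => hS.1
  rcases gammaTwo_cases hS with rfl | rfl
  exacts [triA_mem_Ef, triB_mem_Ef]

lemma edge_mem : segment ℝ ![1, 1, 0] ![0, 0, 2] ∈ GammaK (quad 1 1 1 1) 1 := by
  rw [← convexHull_pair]
  refine ⟨(face_of_weight ![1, 1, 1] 2 (by simp [Fin.forall_fin_succ])
    (by norm_num [isMinVal_vec]) ?_).1, faceDim_pair (by simp)⟩
  intro ν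
  constructor
  · rintro (rfl | rfl) <;> norm_num [V, sum_vec]
  · rintro ⟨rfl | rfl | rfl | rfl, h⟩ <;> revert h <;> norm_num [sum_vec]

/-! ### The intercepts -/

lemma mFace_triA : mFace (quad 1 1 1 1) (convexHull ℝ triA) = 3 := by
  have hS := triA_mem_Ef.1.1
  -- the weight vector of this face is unique up to scaling, and each choice gives intercept `3`
  have key : ∀ u : Fin 3 → ℝ, (∀ i, 0 < u i) →
      convexHull ℝ triA = faceOf u (NDiag (quad 1 1 1 1)) →
      ⨆ i, ell u (NDiag (quad 1 1 1 1)) / u i = 3 := by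
    intro u hu h
    have hmem : ∀ ν ∈ triA, ∑ i, u i * ν i = ell u (NDiag (quad 1 1 1 1)) := fun ν hν =>
      (h ▸ subset_convexHull ℝ triA hν : ν ∈ faceOf u (NDiag (quad 1 1 1 1))).2
    have hA := hmem ![3, 0, 0] (by simp [triA])
    have hC := hmem ![0, 0, 2] (by simp [triA])
    have hD := hmem ![1, 1, 0] (by simp [triA])
    generalize ell u (NDiag (quad 1 1 1 1)) = l at *
    simp [Fin.sum_univ_three] at hA hC hD
    have u0 := hu 0
    have u1 := hu 1
    have u2 := hu 2
    refine le_antisymm (ciSup_le fun i => ?_) ?_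
    · rw [div_le_iff₀ (hu i)]
      fin_cases i <;> simp <;> linarith
    · refine le_trans ?_ (le_ciSup (Set.finite_range fun i => l / u i).bddAbove 0)
      rw [le_div_iff₀ u0]
      linarith
  rw [mFace, show {m | ∃ u : Fin 3 → ℝ, (∀ i, 0 < u i) ∧
    convexHull ℝ triA = faceOf u (NDiag (quad 1 1 1 1)) ∧
    m = ⨆ i, ell u (NDiag (quad 1 1 1 1)) / u i} = {3} from ?_, csSup_singleton]
  ext m
  constructor
  · rintro ⟨u, hu, h, rfl⟩
    exact key u hu h
  · rintro rfl
    obtain ⟨u, hu, h⟩ := hS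
    exact ⟨u, hu, h, (key u hu h).symm⟩

lemma mFace_triB : mFace (quad 1 1 1 1) (convexHull ℝ triB) = 3 := by
  have hS := triB_mem_Ef.1.1
  have key : ∀ u : Fin 3 → ℝ, (∀ i, 0 < u i) →
      convexHull ℝ triB = faceOf u (NDiag (quad 1 1 1 1)) →
      ⨆ i, ell u (NDiag (quad 1 1 1 1)) / u i = 3 := by
    intro u hu h
    have hmem : ∀ ν ∈ triB, ∑ i, u i * ν i = ell u (NDiag (quad 1 1 1 1)) := fun ν hν =>
      (h ▸ subset_convexHull ℝ triB hν : ν ∈ faceOf u (NDiag (quad 1 1 1 1))).2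
    have hB := hmem ![0, 3, 0] (by simp [triB])
    have hC := hmem ![0, 0, 2] (by simp [triB])
    have hD := hmem ![1, 1, 0] (by simp [triB])
    generalize ell u (NDiag (quad 1 1 1 1)) = l at *
    simp [Fin.sum_univ_three] at hB hC hD
    have u0 := hu 0
    have u1 := hu 1
    have u2 := hu 2
    refine le_antisymm (ciSup_le fun i => ?_) ?_
    · rw [div_le_iff₀ (hu i)]
      fin_cases i <;> simp <;> linarith
    · refine le_trans ?_ (le_ciSup (Set.finite_range fun i => l / u i).bddAbove 1)
      rw [le_div_iff₀ u1]
      linarith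
  rw [mFace, show {m | ∃ u : Fin 3 → ℝ, (∀ i, 0 < u i) ∧
    convexHull ℝ triB = faceOf u (NDiag (quad 1 1 1 1)) ∧
    m = ⨆ i, ell u (NDiag (quad 1 1 1 1)) / u i} = {3} from ?_, csSup_singleton]
  ext m
  constructor
  · rintro ⟨u, hu, h, rfl⟩
    exact key u hu h
  · rintro rfl
    obtain ⟨u, hu, h⟩ := hS
    exact ⟨u, hu, h, (key u hu h).symm⟩

lemma sSup_mFace : sSup {m : ℝ | ∃ S ∈ Ef (quad 1 1 1 1), m = mFace (quad 1 1 1 1) S} = 3 := by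
  rw [show {m : ℝ | ∃ S ∈ Ef (quad 1 1 1 1), m = mFace (quad 1 1 1 1) S} = {3} from ?_,
    csSup_singleton]
  ext m
  constructor
  · rintro ⟨S, hS, rfl⟩
    rcases gammaTwo_cases hS.1 with rfl | rfl
    exacts [mFace_triA, mFace_triB]
  · rintro rfl
    exact ⟨_, triA_mem_Ef, mFace_triA.symm⟩

/-- for `f = z₁³ + z₂³ + z₃² + z₁z₂`: `f` is an isolated nondegenerate
singularity, all 2-dimensional compact faces are exceptional (`Γ²(f) = E_f`), the segment
`I₃² = [(1,1,0),(0,0,2)]` is a compact edge of `Γ(f)`, and `£₀(f) = 1`, strictly less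
than `max_{S ∈ E_f} m(S) - 1 = 2`. -/
theorem stmt19 (f : (Fin 3 → ℂ) → ℂ)
    (hf : f = fun z : Fin 3 → ℂ => z 0 ^ 3 + z 1 ^ 3 + z 2 ^ 2 + z 0 * z 1) :
    IsIsolSing f ∧ Nondeg f ∧ GammaK f 2 = Ef f ∧
    segment ℝ ![1, 1, 0] ![0, 0, 2] ∈ GammaK f 1 ∧
    loj f = 1 ∧
    sSup {m : ℝ | ∃ S ∈ Ef f, m = mFace f S} - 1 = 2 ∧
    loj f < sSup {m : ℝ | ∃ S ∈ Ef f, m = mFace f S} - 1 := by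
  have hq : f = quad 1 1 1 1 := by
    rw [hf]
    funext z
    simp [quad]
  rw [hq, loj_quad, sSup_mFace]
  exact ⟨isolSing_quad, nondeg_quad, gammaTwo_eq, edge_mem, rfl, by norm_num, by norm_num⟩
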